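/- Let G be a twice continuously differentiable convex function on p × q real matrices. Let H(U,V) = G(UVᵀ) for U ∈ ℝ^{p×m}, V ∈ ℝ^{q×m}, m > 1. If (U,V) satisfies ∇H(U,V) = 0 and the Hessian of H at (U,V) is positive semidefinite, and if U or V is rank deficient, then ∇G(UVᵀ) = 0, so N = UVᵀ is a global minimum of G. -/

import Mathlib

open Matrix

attribute [local instance] Matrix.normedAddCommGroup Matrix.normedSpace

/-!
The Hessian of `H` at `(U, V)` evaluated on `(X, 0)` and `(0, Y)` is
`∇²G[XVᵀ, UYᵀ] + ∇G[XYᵀ]`. If `UYᵀ = 0` or `XVᵀ = 0`, its first summand vanishes, and moreover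
`(0, Y)`, respectively `(X, 0)`, is a direction of zero curvature. By the Cauchy–Schwarz inequality
such a direction lies in the kernel of a positive semidefinite Hessian, so `∇G[XYᵀ] = 0`. When
`Uz = 0` or `Vz = 0` with `z ≠ 0`, this applies to `X = azᵀ` and `Y = bzᵀ` for all `a` and `b`, and
`XYᵀ` is a nonzero multiple of the rank-one matrix `abᵀ`. Rank-one matrices span.
-/

section SecondDerivative

variable {𝕜 E F G : Type*} [NontriviallyNormedField 𝕜]
  [NormedAddCommGroup E] [NormedSpace 𝕜 E] [NormedAddCommGroup F] [NormedSpace 𝕜 F]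
  [NormedAddCommGroup G] [NormedSpace 𝕜 G]

theorem fderiv_fderiv_comp_apply {g : F → G} {f : E → F} {x : E}
    (hg : ContDiffAt 𝕜 2 g (f x)) (hf : ContDiffAt 𝕜 2 f x) (v w : E) :
    fderiv 𝕜 (fderiv 𝕜 (g ∘ f)) x v w =
      fderiv 𝕜 (fderiv 𝕜 g) (f x) (fderiv 𝕜 f x v) (fderiv 𝕜 f x w) +
        fderiv 𝕜 g (f x) (fderiv 𝕜 (fderiv 𝕜 f) x v w) := by
  have hg_near : ∀ᶠ y in nhds x, DifferentiableAt 𝕜 g (f y) :=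
    hf.continuousAt.eventually <|
      (hg.eventually (by simp)).mono fun _ h => h.differentiableAt two_ne_zero
  have hf_near : ∀ᶠ y in nhds x, DifferentiableAt 𝕜 f y :=
    (hf.eventually (by simp)).mono fun _ h => h.differentiableAt two_ne_zero
  have hcomp : fderiv 𝕜 (g ∘ f) =ᶠ[nhds x]
      fun y => (fderiv 𝕜 g (f y)).comp (fderiv 𝕜 f y) := by
    filter_upwards [hg_near, hf_near] with y hgy hfy using fderiv_comp y hgy hfy
  have hg' : DifferentiableAt 𝕜 (fderiv 𝕜 g) (f x) :=
    (hg.fderiv_right (m := 1) le_rfl).differentiableAt one_ne_zero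
  have hf' : DifferentiableAt 𝕜 (fderiv 𝕜 f) x :=
    (hf.fderiv_right (m := 1) le_rfl).differentiableAt one_ne_zero
  have hfx : DifferentiableAt 𝕜 f x := hf.differentiableAt two_ne_zero
  have hD : HasFDerivAt (fun y => (fderiv 𝕜 g (f y)).comp (fderiv 𝕜 f y)) _ x :=
    (hg'.hasFDerivAt.comp x hfx.hasFDerivAt).clm_comp hf'.hasFDerivAt
  rw [hcomp.fderiv_eq, hD.fderiv]
  simp [add_comm]

variable {Z : Type*} [NormedAddCommGroup Z] [NormedSpace 𝕜 Z]

theorem fderiv_fderiv_bilinear_apply (B : E →L[𝕜] F →L[𝕜] G) (a v w : E × F) :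
    fderiv 𝕜 (fderiv 𝕜 fun p : E × F => B p.1 p.2) a v w = B v.1 w.2 + B w.1 v.2 := by
  have hB : fderiv 𝕜 (fun p : E × F => B p.1 p.2) = B.deriv₂ :=
    funext fun p => B.isBoundedBilinearMap.fderiv p
  rw [hB, ContinuousLinearMap.fderiv, ContinuousLinearMap.coe_deriv₂]

theorem fderiv_fderiv_comp_bilinear_apply (B : E →L[𝕜] F →L[𝕜] G) {g : G → Z} {a : E × F}
    (hg : ContDiffAt 𝕜 2 g (B a.1 a.2)) (v w : E × F) :
    fderiv 𝕜 (fderiv 𝕜 fun p : E × F => g (B p.1 p.2)) a v w =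
      fderiv 𝕜 (fderiv 𝕜 g) (B a.1 a.2) (B a.1 v.2 + B v.1 a.2) (B a.1 w.2 + B w.1 a.2) +
        fderiv 𝕜 g (B a.1 a.2) (B v.1 w.2 + B w.1 v.2) := by
  have hB (u : E × F) : fderiv 𝕜 (fun p : E × F => B p.1 p.2) a u = B a.1 u.2 + B u.1 a.2 := by
    rw [B.isBoundedBilinearMap.fderiv, IsBoundedBilinearMap.deriv_apply]
  have hchain := fderiv_fderiv_comp_apply (f := fun p : E × F => B p.1 p.2) hg
    B.isBoundedBilinearMap.contDiff.contDiffAt v w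
  rwa [hB, hB, fderiv_fderiv_bilinear_apply] at hchain

end SecondDerivative

section RealFunctions

variable {E F G : Type*} [NormedAddCommGroup E] [NormedSpace ℝ E]
  [NormedAddCommGroup F] [NormedSpace ℝ F] [NormedAddCommGroup G] [NormedSpace ℝ G]

theorem fderiv_fderiv_apply_eq_zero_of_apply_self_eq_zero {f : E → ℝ} {x : E}
    (hf : ContDiffAt ℝ 2 f x) (hpos : ∀ w, 0 ≤ fderiv ℝ (fderiv ℝ f) x w w) {v : E}
    (hv : fderiv ℝ (fderiv ℝ f) x v v = 0) : fderiv ℝ (fderiv ℝ f) x v = 0 := by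
  let hess : LinearMap.BilinForm ℝ E := (fderiv ℝ (fderiv ℝ f) x).toBilinForm
  have hsymm : LinearMap.IsSymm hess := ⟨fun u w => hf.isSymmSndFDerivAt (by simp) u w⟩
  have hker : v ∈ LinearMap.ker hess := (hess.apply_apply_same_eq_zero_iff hpos hsymm).1 hv
  exact ContinuousLinearMap.ext fun w => LinearMap.congr_fun (LinearMap.mem_ker.1 hker) w

theorem fderiv_bilinear_apply_eq_zero_of_fderiv_fderiv_nonneg (B : E →L[ℝ] F →L[ℝ] G)
    {g : G → ℝ} {u : E} {v : F} (hg : ContDiffAt ℝ 2 g (B u v))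
    (hpos : ∀ w, 0 ≤ fderiv ℝ (fderiv ℝ fun p : E × F => g (B p.1 p.2)) (u, v) w w)
    {x : E} {y : F} (hxy : B u y = 0 ∨ B x v = 0) : fderiv ℝ g (B u v) (B x y) = 0 := by
  have hsmooth : ContDiffAt ℝ 2 (fun p : E × F => g (B p.1 p.2)) (u, v) :=
    hg.comp (u, v) B.isBoundedBilinearMap.contDiff.contDiffAt
  have hess_eq := fderiv_fderiv_comp_bilinear_apply B (a := (u, v)) hg
  rcases hxy with huy | hxv
  · have hflat := fderiv_fderiv_apply_eq_zero_of_apply_self_eq_zero hsmooth hpos (v := (0, y))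
      (by simp [hess_eq, huy])
    simpa [hess_eq, huy] using DFunLike.congr_fun hflat (x, 0)
  · have hflat := fderiv_fderiv_apply_eq_zero_of_apply_self_eq_zero hsmooth hpos (v := (x, 0))
      (by simp [hess_eq, hxv])
    simpa [hess_eq, hxv] using DFunLike.congr_fun hflat (0, y)

theorem hasFDerivWithinAt_apply_sub_le_of_convexOn {s : Set E} {f : E → ℝ} {f' : E →L[ℝ] ℝ}
    {x y : E} (hconv : ConvexOn ℝ s f) (hf : HasFDerivWithinAt f f' s x) (hx : x ∈ s)
    (hy : y ∈ s) : f' (y - x) ≤ f y - f x := by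
  let line : ℝ →ᵃ[ℝ] E := AffineMap.lineMap x y
  have hline : HasDerivWithinAt line (y - x) (line ⁻¹' s) 0 :=
    AffineMap.hasDerivAt_lineMap.hasDerivWithinAt
  have hderiv : HasDerivWithinAt (f ∘ line) (f' (y - x)) (line ⁻¹' s) 0 :=
    HasFDerivWithinAt.comp_hasDerivWithinAt (t := s) 0 (by simpa [line] using hf) hline
      (Set.mapsTo_preimage line s)
  have hslope := (hconv.comp_affineMap line).le_slope_of_hasDerivWithinAt
    (by simpa [line] using hx) (by simpa [line] using hy) one_pos hderiv
  simpa [slope_def_field, line] using hslope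

theorem isMinOn_of_convexOn_of_hasFDerivWithinAt_zero {s : Set E} {f : E → ℝ} {x : E}
    (hconv : ConvexOn ℝ s f) (hf : HasFDerivWithinAt f (0 : E →L[ℝ] ℝ) s x) (hx : x ∈ s) :
    IsMinOn f s x :=
  fun _ hy => sub_nonneg.1 (hasFDerivWithinAt_apply_sub_le_of_convexOn hconv hf hx hy)

end RealFunctions

section Matrices

variable {p q m : Type*}

theorem exists_mulVec_eq_zero_of_rank_lt_card {R : Type*} [CommRing R] [Nontrivial R] [Fintype m]
    {A : Matrix p m R} (hA : A.rank < Fintype.card m) : ∃ z ≠ 0, A *ᵥ z = 0 := by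
  by_contra! hA_ne
  have hker : LinearMap.ker A.mulVecLin = ⊥ :=
    ker_mulVecLin_eq_bot_iff.2 fun z hz => of_not_not fun hz_ne => hA_ne z hz_ne hz
  have hfull : A.rank = Fintype.card m :=
    (LinearMap.finrank_range_of_inj (LinearMap.ker_eq_bot.1 hker)).trans
      (Module.finrank_fintype_fun_eq_card R)
  exact hA.ne hfull

theorem linearMap_eq_zero_of_forall_vecMulVec_eq_zero {R M : Type*} [Semiring R]
    [AddCommMonoid M] [Module R M] [Finite p] [Finite q] {φ : Matrix p q R →ₗ[R] M}
    (hφ : ∀ a b, φ (vecMulVec a b) = 0) : φ = 0 := by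
  classical
  refine Matrix.ext_linearMap (R := R) fun i j => LinearMap.ext_ring ?_
  simpa [single_eq_single_vecMulVec_single] using hφ (Pi.single i 1) (Pi.single j 1)

variable [Fintype p] [Fintype q] [Fintype m]

/-- The factorization map `(X, Y) ↦ X * Yᵀ` as a continuous bilinear map, so that `H` is `G`
composed with it and the chain rule for bilinear maps gives its Hessian. -/
noncomputable def mulTransposeCLM : Matrix p m ℝ →L[ℝ] Matrix q m ℝ →L[ℝ] Matrix p q ℝ :=
  ((mulLinearMap ℝ).compl₂ (transposeLinearEquiv q m ℝ ℝ).toLinearMap).toContinuousBilinearMap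

theorem fderiv_mul_transpose_eq_zero_of_rank_lt_card {G : Matrix p q ℝ → ℝ}
    {U : Matrix p m ℝ} {V : Matrix q m ℝ} (hG : ContDiffAt ℝ 2 G (U * Vᵀ))
    (hhess : ∀ w, 0 ≤ fderiv ℝ
      (fderiv ℝ fun UV : Matrix p m ℝ × Matrix q m ℝ => G (UV.1 * UV.2ᵀ)) (U, V) w w)
    (hrank : U.rank < Fintype.card m ∨ V.rank < Fintype.card m) :
    fderiv ℝ G (U * Vᵀ) = 0 := by
  obtain ⟨z, hz, hUVz⟩ : ∃ z ≠ 0, U *ᵥ z = 0 ∨ V *ᵥ z = 0 := by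
    rcases hrank with hU | hV
    · exact (exists_mulVec_eq_zero_of_rank_lt_card hU).imp fun z h => ⟨h.1, .inl h.2⟩
    · exact (exists_mulVec_eq_zero_of_rank_lt_card hV).imp fun z h => ⟨h.1, .inr h.2⟩
  have hrank_one (a : p → ℝ) (b : q → ℝ) : fderiv ℝ G (U * Vᵀ) (vecMulVec a b) = 0 := by
    have hflat : U * (vecMulVec b z)ᵀ = 0 ∨ vecMulVec a z * Vᵀ = 0 :=
      hUVz.imp (fun hU => by rw [transpose_vecMulVec, mul_vecMulVec, hU, zero_vecMulVec])
        fun hV => by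
          rw [vecMulVec_mul, vecMul_transpose, hV]
          exact Matrix.ext fun i _ => mul_zero (a i)
    have hzero : fderiv ℝ G (U * Vᵀ) (vecMulVec a z * (vecMulVec b z)ᵀ) = 0 :=
      fderiv_bilinear_apply_eq_zero_of_fderiv_fderiv_nonneg mulTransposeCLM
        (u := U) (v := V) hG hhess (x := vecMulVec a z) (y := vecMulVec b z) hflat
    rw [transpose_vecMulVec, vecMulVec_mul_vecMulVec, vecMulVec_smul, map_smul] at hzero
    exact (smul_eq_zero.1 hzero).resolve_left (dotProduct_self_eq_zero.not.2 hz)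
  exact ContinuousLinearMap.coe_injective <|
    linearMap_eq_zero_of_forall_vecMulVec_eq_zero hrank_one

end Matrices

theorem lowRank_local_optimum_global_general
    {p q m : Type*} [Fintype p] [Fintype q] [Fintype m]
    (G : Matrix p q ℝ → ℝ) (hG_conv : ConvexOn ℝ Set.univ G)
    (H : Matrix p m ℝ × Matrix q m ℝ → ℝ) (hH : ∀ UV, H UV = G (UV.1 * UV.2ᵀ))
    (U : Matrix p m ℝ) (V : Matrix q m ℝ) (hG_smooth : ContDiffAt ℝ 2 G (U * Vᵀ))
    (hhess : ∀ w, 0 ≤ fderiv ℝ (fderiv ℝ H) (U, V) w w)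
    (hrank : U.rank < Fintype.card m ∨ V.rank < Fintype.card m) :
    fderiv ℝ G (U * Vᵀ) = 0 ∧ ∀ M : Matrix p q ℝ, G (U * Vᵀ) ≤ G M := by
  obtain rfl : H = fun UV => G (UV.1 * UV.2ᵀ) := funext hH
  have hgrad : fderiv ℝ G (U * Vᵀ) = 0 :=
    fderiv_mul_transpose_eq_zero_of_rank_lt_card hG_smooth hhess hrank
  have hderiv : HasFDerivAt G 0 (U * Vᵀ) :=
    hgrad ▸ (hG_smooth.differentiableAt two_ne_zero).hasFDerivAt
  have hmin : IsMinOn G Set.univ (U * Vᵀ) :=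
    isMinOn_of_convexOn_of_hasFDerivWithinAt_zero hG_conv hderiv.hasFDerivWithinAt (Set.mem_univ _)
  exact ⟨hgrad, fun M => hmin (Set.mem_univ M)⟩

/-- a rank-deficient second-order critical point of H(U,V) = G(UVᵀ) yields a
global minimum of the convex function G. -/
theorem lowRank_local_optimum_global
    {p q m : ℕ} (hm : 1 < m)
    (G : Matrix (Fin p) (Fin q) ℝ → ℝ)
    (hG_conv : ConvexOn ℝ Set.univ G)
    (hG_smooth : ContDiff ℝ 2 G)
    (H : Matrix (Fin p) (Fin m) ℝ × Matrix (Fin q) (Fin m) ℝ → ℝ)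
    (hH : ∀ UV, H UV = G (UV.1 * UV.2ᵀ))
    (U : Matrix (Fin p) (Fin m) ℝ) (V : Matrix (Fin q) (Fin m) ℝ)
    (hcrit : fderiv ℝ H (U, V) = 0)
    (hhess : ∀ w : Matrix (Fin p) (Fin m) ℝ × Matrix (Fin q) (Fin m) ℝ,
      0 ≤ fderiv ℝ (fderiv ℝ H) (U, V) w w)
    (hrank : U.rank < m ∨ V.rank < m) :
    fderiv ℝ G (U * Vᵀ) = 0 ∧ ∀ M : Matrix (Fin p) (Fin q) ℝ, G (U * Vᵀ) ≤ G M :=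
  lowRank_local_optimum_global_general G hG_conv H hH U V hG_smooth.contDiffAt hhess
    (by simpa only [Fintype.card_fin] using hrank)
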